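/- Let V be an H-module that is finite-dimensional over F and indecomposable. Then the endomorphism ring End_H(V) is a local ring: it is nontrivial, and for all a, b ∈ End_H(V) with a + b = id_V, either a is a unit or b is a unit. -/

import Mathlib

/-- An `H`-module `M` is indecomposable if it is nonzero and whenever `p` and `q` are
complementary submodules, one of them is trivial. -/
def IsIndecomposableModule (H : Type*) [Ring H] (M : Type*) [AddCommGroup M]
    [Module H M] : Prop :=
  (∃ x : M, x ≠ 0) ∧
    ∀ p q : Submodule H M, p ⊓ q = ⊥ → p ⊔ q = ⊤ → p = ⊥ ∨ q = ⊥

/-- Fitting's lemma: an endomorphism of an indecomposable module of finite length is either a unit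
or nilpotent. -/
theorem IsIndecomposableModule.isUnit_or_isNilpotent {H M : Type*} [Ring H] [AddCommGroup M]
    [Module H M] [IsArtinian H M] [IsNoetherian H M] (hM : IsIndecomposableModule H M)
    (f : Module.End H M) : IsUnit f ∨ IsNilpotent f := by
  obtain ⟨n, hn, hpos⟩ :=
    (f.eventually_isCompl_ker_pow_range_pow.and (Filter.eventually_gt_atTop 0)).exists
  rcases hM.2 _ _ hn.inf_eq_bot hn.sup_eq_top with h | h
  · left
    rw [← isUnit_pow_iff hpos.ne', Module.End.isUnit_iff]
    exact IsArtinian.bijective_of_injective_endomorphism _ (LinearMap.ker_eq_bot.mp h)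
  · exact Or.inr ⟨n, LinearMap.range_eq_bot.mp h⟩

theorem stmt13 (F : Type*) [Field F] (H : Type*) [Ring H] [Algebra F H]
    (V : Type*)
    [AddCommGroup V] [Module H V] [Module F V] [IsScalarTower F H V] [FiniteDimensional F V]
    (hV : IsIndecomposableModule H V) :
    Nontrivial (Module.End H V) ∧
      ∀ a b : Module.End H V, a + b = 1 → IsUnit a ∨ IsUnit b := by
  have : IsArtinian H V := isArtinian_of_tower F inferInstance
  have : IsNoetherian H V := isNoetherian_of_tower F inferInstance
  have : Nontrivial V := hV.1.elim fun x hx => nontrivial_of_ne x 0 hx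
  refine ⟨inferInstance, fun a b hab => (hV.isUnit_or_isNilpotent a).imp_right fun ha => ?_⟩
  rw [eq_sub_of_add_eq' hab]
  exact ha.isUnit_one_sub
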